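/- For all integers a ≥ 2 and m ≥ 1, (a^m)! · ((a−1)!)^m = (a^m − 1)! · (a!)^m; moreover, the multiset consisting of a^m, the part a−1 taken m times, and the part 1 taken m−1 times, and the multiset consisting of a^m − 1 and the part a taken m times, both sum to a^m + am − 1, so the two corresponding partitions of a^m + am − 1 yield the same multinomial coefficient. -/

import Mathlib

/-- The product, with multiplicity, of the factorials of the elements of a multiset. -/
def factorialProd (A : Multiset ℕ) : ℕ := (A.map Nat.factorial).prod

/-!
Since `j! = j * (j - 1)!` for `j > 0`, lowering every part of a multiset `s` of positive integers
by one divides the product of the factorials by `∏ s`, while raising the single part `∏ s - 1` to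
`∏ s` multiplies it by `∏ s`. The two changes cancel, and parts equal to `1` restore the sum without
affecting the product. The theorem is the case of `m` copies of `a`.
-/

open Multiset

theorem factorialProd_cons (n : ℕ) (s : Multiset ℕ) :
    factorialProd (n ::ₘ s) = n.factorial * factorialProd s := by
  simp [factorialProd]

theorem factorialProd_add (s t : Multiset ℕ) :
    factorialProd (s + t) = factorialProd s * factorialProd t := by
  simp [factorialProd]

theorem factorialProd_replicate (k n : ℕ) :
    factorialProd (replicate k n) = n.factorial ^ k := by
  simp [factorialProd]

section PositiveParts

variable {s : Multiset ℕ}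

theorem prod_mul_factorialProd_map_pred (h0 : 0 ∉ s) :
    s.prod * factorialProd (s.map (· - 1)) = factorialProd s := by
  have factorial_eq : ∀ j ∈ s, j * (j - 1).factorial = j.factorial := fun j hj =>
    Nat.mul_factorial_pred (ne_of_mem_of_not_mem hj h0)
  calc s.prod * factorialProd (s.map (· - 1))
      = (s.map fun j => j * (j - 1).factorial).prod := by simp [factorialProd, prod_map_mul]
    _ = factorialProd s := by rw [map_congr rfl factorial_eq, factorialProd]

theorem sum_map_pred_add_card (h0 : 0 ∉ s) : (s.map (· - 1)).sum + card s = s.sum := by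
  have pred_add_one : ∀ j ∈ s, j - 1 + 1 = j := fun j hj =>
    Nat.succ_pred (ne_of_mem_of_not_mem hj h0)
  calc (s.map (· - 1)).sum + card s
      = (s.map fun j => j - 1 + 1).sum := by simp [sum_map_add]
    _ = s.sum := by rw [map_congr rfl pred_add_one, map_id']

theorem factorial_prod_mul_factorialProd_map_pred (h0 : 0 ∉ s) :
    s.prod.factorial * factorialProd (s.map (· - 1))
      = (s.prod - 1).factorial * factorialProd s := by
  rw [← Nat.mul_factorial_pred (prod_ne_zero h0), ← prod_mul_factorialProd_map_pred h0]
  ring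

theorem irreducible_family_general (h0 : 0 ∉ s) (hs : s ≠ 0) :
    s.prod.factorial * factorialProd (s.map (· - 1))
      = (s.prod - 1).factorial * factorialProd s ∧
    (s.prod ::ₘ (s.map (· - 1) + replicate (card s - 1) 1)).sum = s.prod + s.sum - 1 ∧
    ((s.prod - 1) ::ₘ s).sum = s.prod + s.sum - 1 ∧
    factorialProd (s.prod ::ₘ (s.map (· - 1) + replicate (card s - 1) 1))
      = factorialProd ((s.prod - 1) ::ₘ s) := by
  have hprod : 0 < s.prod := Nat.pos_of_ne_zero (prod_ne_zero h0)
  have hcard : 0 < card s := card_pos.mpr hs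
  have hsum := sum_map_pred_add_card h0
  have hfactorial := factorial_prod_mul_factorialProd_map_pred h0
  refine ⟨hfactorial, ?_, ?_, ?_⟩
  · simp only [sum_cons, sum_add, sum_replicate, smul_eq_mul, mul_one]
    omega
  · rw [sum_cons]
    omega
  · simpa only [factorialProd_cons, factorialProd_add, factorialProd_replicate,
      Nat.factorial_one, one_pow, mul_one] using hfactorial

end PositiveParts

/-- For `a ≥ 2` and `m ≥ 1`, `(a^m)! · ((a−1)!)^m = (a^m − 1)! · (a!)^m`; moreover the multiset
`{a^m} ∪ {a−1 (m times)} ∪ {1 (m−1 times)}` and the multiset `{a^m − 1} ∪ {a (m times)}` both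
sum to `a^m + am − 1`, and the corresponding partitions of `a^m + am − 1` yield the same
multinomial coefficient. -/
theorem irreducible_family (a m : ℕ) (ha : 2 ≤ a) (hm : 1 ≤ m) :
    (a ^ m).factorial * (a - 1).factorial ^ m
      = (a ^ m - 1).factorial * a.factorial ^ m ∧
    ((a ^ m) ::ₘ (Multiset.replicate m (a - 1) + Multiset.replicate (m - 1) 1)).sum
      = a ^ m + a * m - 1 ∧
    ((a ^ m - 1) ::ₘ Multiset.replicate m a).sum = a ^ m + a * m - 1 ∧
    factorialProd ((a ^ m) ::ₘ (Multiset.replicate m (a - 1) + Multiset.replicate (m - 1) 1))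
      = factorialProd ((a ^ m - 1) ::ₘ Multiset.replicate m a) := by
  have h0 : 0 ∉ replicate m a := fun h => absurd (eq_of_mem_replicate h) (by omega)
  have hs : replicate m a ≠ 0 := card_pos.mp (by rwa [card_replicate])
  simpa only [map_replicate, prod_replicate, sum_replicate, card_replicate, smul_eq_mul,
    mul_comm m a, factorialProd_replicate] using irreducible_family_general h0 hs
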